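/- Let G = GP(Γ, 𝒢) be a non-degenerate graph product over a finite simple graph Γ with diam(Γ) ≥ 2. Then G admits a non-elementary acylindrical action on a simplicial tree if and only if G is not virtually cyclic and there exist two vertices a, b ∈ V(Γ) at edge distance at least 2 such that the full subgroup on link(a) ∩ link(b) is finite. -/

import Mathlib

/-- An action of a group `G` by simplicial isometries (automorphisms) on a simplicial
tree, i.e. a connected acyclic simple graph, with the natural edge metric. -/
structure TreeAction (G : Type*) [Group G] where
  V : Type
  T : SimpleGraph V
  isTree : T.IsTree
  act : G →* (T ≃g T)

namespace TreeAction

variable {G : Type*} [Group G] (A : TreeAction G)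

/-- The action fixes a point of the tree (the action is elliptic). -/
def FixesPoint : Prop := ∃ x : A.V, ∀ g : G, A.act g x = x

/-- An element is elliptic if it fixes a point of the tree. -/
def Elliptic (g : G) : Prop := ∃ x : A.V, A.act g x = x

/-- The action has bounded orbits. -/
def BoundedOrbits : Prop := ∃ (x : A.V) (B : ℕ), ∀ g : G, A.T.dist x (A.act g x) ≤ B

/-- `(k, C)`-acylindricity: the pointwise stabiliser of any geodesic edge path of length
at least `k` (equivalently, in a tree, the common stabiliser of two points at distance
at least `k`) has at most `C` elements. -/
def KCAcylindrical (k C : ℕ) : Prop :=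
  ∀ x y : A.V, k ≤ A.T.dist x y →
    {g : G | A.act g x = x ∧ A.act g y = y}.Finite ∧
      {g : G | A.act g x = x ∧ A.act g y = y}.ncard ≤ C

/-- An action on a tree is acylindrical if it is `(k, C)`-acylindrical for some `k ≥ 0`,
`C ≥ 1`. -/
def Acylindrical : Prop := ∃ k C : ℕ, 1 ≤ C ∧ A.KCAcylindrical k C

/-- Bowditch's definition of acylindricity for the action on the tree. -/
def BowditchAcylindrical : Prop :=
  ∀ ε : ℕ, ∃ R N : ℕ, ∀ x y : A.V, R ≤ A.T.dist x y →
    {g : G | A.T.dist x (A.act g x) ≤ ε ∧ A.T.dist y (A.act g y) ≤ ε}.Finite ∧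
      {g : G | A.T.dist x (A.act g x) ≤ ε ∧ A.T.dist y (A.act g y) ≤ ε}.ncard ≤ N

end TreeAction

/-- A group is virtually cyclic if it has a cyclic subgroup of finite index. -/
def IsVirtuallyCyclic (G : Type*) [Group G] : Prop :=
  ∃ H : Subgroup G, H.FiniteIndex ∧ IsCyclic H

namespace TreeAction

variable {G : Type*} [Group G] (A : TreeAction G)

/-- The action is non-elementary: unbounded orbits and the group is not virtually
cyclic. -/
def NonElementary : Prop := ¬ A.BoundedOrbits ∧ ¬ IsVirtuallyCyclic G

/-- The action fixes a bi-infinite geodesic line setwise. -/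
def FixesLine : Prop :=
  ∃ ℓ : ℤ → A.V, (∀ m n : ℤ, (A.T.dist (ℓ m) (ℓ n) : ℤ) = |m - n|) ∧
    ∀ g : G, (fun v => A.act g v) '' Set.range ℓ = Set.range ℓ

end TreeAction

/-- A group is acylindrically arboreal if it admits a non-elementary acylindrical
action on a simplicial tree. -/
def AcylindricallyArboreal (G : Type*) [Group G] : Prop :=
  ∃ A : TreeAction G, A.Acylindrical ∧ A.NonElementary

/-- Property (FA⁻): every action on a simplicial tree either fixes a point or fixes a
bi-infinite geodesic setwise. -/
def PropertyFAMinus (G : Type*) [Group G] : Prop :=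
  ∀ A : TreeAction G, A.FixesPoint ∨ A.FixesLine

section GraphProduct

variable {V : Type} (Γ : SimpleGraph V) (Gv : V → Type) [∀ v, Group (Gv v)]

/-- The commutation relators defining a graph product: for each edge `{u, v}` of `Γ`,
the elements of `G_u` commute with the elements of `G_v` inside the free product. -/
def graphProductRels : Set (Monoid.CoprodI Gv) :=
  {x | ∃ (u v : V), Γ.Adj u v ∧ ∃ (a : Gv u) (b : Gv v),
    x = Monoid.CoprodI.of a * Monoid.CoprodI.of b *
      (Monoid.CoprodI.of a)⁻¹ * (Monoid.CoprodI.of b)⁻¹}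

/-- The graph product of the groups `Gv` over the finite simple graph `Γ`: the free
product of the vertex groups modulo commutation of adjacent vertex groups. -/
def GraphProduct : Type :=
  Monoid.CoprodI Gv ⧸ Subgroup.normalClosure (graphProductRels Γ Gv)

instance : Group (GraphProduct Γ Gv) :=
  inferInstanceAs (Group (Monoid.CoprodI Gv ⧸ Subgroup.normalClosure (graphProductRels Γ Gv)))

/-- The canonical map of a vertex group into the graph product. -/
def GraphProduct.of (v : V) : Gv v →* GraphProduct Γ Gv :=
  (QuotientGroup.mk' _).comp Monoid.CoprodI.of

/-- The full subgroup on a set `S` of vertices: the subgroup generated by the vertex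
groups of the vertices in `S`. -/
def GraphProduct.full (S : Set V) : Subgroup (GraphProduct Γ Gv) :=
  ⨆ v ∈ S, (GraphProduct.of Γ Gv v).range

/-- A graph product is non-degenerate if all vertex groups are nontrivial and `Γ` has
more than one vertex. -/
def GraphProduct.NonDegenerate : Prop :=
  (∀ v, Nontrivial (Gv v)) ∧ Nontrivial V

/-- The conjugate `g H g⁻¹` of a subgroup. -/
def conjSubgroup {G : Type*} [Group G] (g : G) (H : Subgroup G) : Subgroup G :=
  H.map (MulAut.conj g).toMonoidHom

/-- Edge distance at least `n` between two vertices of a graph (with the convention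
that vertices in different components are at infinite distance). -/
def SimpleGraph.distAtLeast (n : ℕ) (a b : V) : Prop :=
  a ≠ b ∧ (¬ Γ.Reachable a b ∨ n ≤ Γ.dist a b)

/-- Two vertices are separated (w.r.t. the graph product) if their edge distance is at
least 2 and the full subgroup on the intersection of their links is finite. -/
def GraphProduct.SeparatedPair (a b : V) : Prop :=
  a ≠ b ∧ ¬ Γ.Adj a b ∧
    Finite (GraphProduct.full Γ Gv (Γ.neighborSet a ∩ Γ.neighborSet b))

/-- The graph-theoretic diameter of `Γ` is at least `n`. -/
def SimpleGraph.diamAtLeast (n : ℕ) : Prop := ∃ a b : V, Γ.distAtLeast n a b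

end GraphProduct

namespace TreeMetric

variable {X : Type} {T : SimpleGraph X}

theorem exists_geod (hT : T.IsTree) (x y : X) : ∃ p : ℕ → X, p 0 = x ∧ p (T.dist x y) = y ∧
    ∀ i < T.dist x y, T.Adj (p i) (p (i + 1)) := by
  obtain ⟨w, hw⟩ := hT.connected.exists_walk_length_eq_dist x y
  refine ⟨w.getVert, by simp, by rw [← hw]; simp, fun i hi => w.adj_getVert_succ (by omega)⟩

theorem tri (hT : T.IsTree) (x y z : X) : T.dist x z ≤ T.dist x y + T.dist y z :=
  hT.connected.dist_triangle

theorem geod_le (hT : T.IsTree) {p : ℕ → X} {n : ℕ} (hp : ∀ i < n, T.Adj (p i) (p (i + 1)))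
    (s d : ℕ) (h : s + d ≤ n) : T.dist (p s) (p (s + d)) ≤ d := by
  induction d with
  | zero => simp
  | succ d ih =>
    have h1 := ih (by omega)
    have h2 : T.dist (p (s + d)) (p (s + d + 1)) = 1 :=
      SimpleGraph.dist_eq_one_iff_adj.2 (hp _ (by omega))
    have := tri hT (p s) (p (s + d)) (p (s + d + 1))
    rw [← add_assoc]; omega

theorem closer_unique (hT : T.IsTree) {z u v w : X} (hv : T.Adj v u) (hw : T.Adj w u)
    (h1 : T.dist z u = T.dist z v + 1) (h2 : T.dist z u = T.dist z w + 1) : v = w := by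
  obtain ⟨p, hp⟩ := hT.connected.exists_walk_length_eq_dist z v
  obtain ⟨q, hq⟩ := hT.connected.exists_walk_length_eq_dist z w
  have hp' : (p.concat hv).IsPath :=
    SimpleGraph.Walk.isPath_of_length_eq_dist _ (by simp [hp, h1])
  have hq' : (q.concat hw).IsPath :=
    SimpleGraph.Walk.isPath_of_length_eq_dist _ (by simp [hq, h2])
  have := (hT.isAcyclic.subsingleton_path z u).elim ⟨_, hp'⟩ ⟨_, hq'⟩
  have h3 : p.concat hv = q.concat hw := congrArg Subtype.val this
  have h4 := congrArg SimpleGraph.Walk.penultimate h3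
  simpa using h4

theorem shape (f : ℕ → ℕ) (n : ℕ) (h1 : ∀ i < n, f (i + 1) = f i + 1 ∨ f i = f (i + 1) + 1)
    (h2 : ∀ i, i + 2 ≤ n → f (i + 1) = f i + 1 → f (i + 2) = f (i + 1) + 1) :
    ∃ t0 ≤ n, ∃ c : ℤ, ∀ t ≤ n, (f t : ℤ) = c + |(t : ℤ) - t0| := by
  induction n with
  | zero => exact ⟨0, le_rfl, f 0, by intro t ht; obtain rfl : t = 0 := by omega
                                      simp⟩
  | succ n ih =>
    obtain ⟨t0, ht0, c, hc⟩ := ih (fun i hi => h1 i (by omega)) (fun i hi => h2 i (by omega))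
    rcases h1 n (by omega) with h | h
    · refine ⟨t0, by omega, c, fun t ht => ?_⟩
      rcases Nat.lt_or_ge n t with h' | h'
      · obtain rfl : t = n + 1 := by omega
        have := hc n le_rfl
        rw [abs_of_nonneg (by omega)] at *
        push_cast; omega
      · exact hc t h'
    · have : t0 = n := by
        by_contra hne
        obtain ⟨m, rfl⟩ : ∃ m, n = m + 1 := ⟨n - 1, by omega⟩
        have a1 := hc m (by omega)
        have a2 := hc (m + 1) (by omega)
        simp only [abs] at a1 a2
        have := h2 m (by omega) (by push_cast at *; omega)
        have h' : f (m + 1) = f (m + 2) + 1 := h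
        omega
      subst this
      refine ⟨t0 + 1, le_rfl, c - 1, fun t ht => ?_⟩
      have e := hc t0 le_rfl
      rcases Nat.lt_or_ge t0 t with h' | h'
      · obtain rfl : t = t0 + 1 := by omega
        simp at e ⊢; omega
      · have := hc t h'
        rw [abs_of_nonpos (by omega)] at *
        push_cast; omega

theorem adj_cases (hT : T.IsTree) (z : X) {u v : X} (h : T.Adj u v) :
    T.dist z v = T.dist z u + 1 ∨ T.dist z u = T.dist z v + 1 := by
  have := hT.dist_eq_dist_add_one_of_adj z h
  tauto

theorem proj (hT : T.IsTree) (x y : X) {p : ℕ → X} (h0 : p 0 = x) (hn : p (T.dist x y) = y)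
    (hp : ∀ i < T.dist x y, T.Adj (p i) (p (i + 1))) (z : X) :
    ∃ t0 ≤ T.dist x y, ∃ c : ℤ, ∀ t ≤ T.dist x y,
      (T.dist z (p t) : ℤ) = c + |(t : ℤ) - t0| := by
  apply shape (fun t => T.dist z (p t))
  · intro i hi
    exact adj_cases hT z (hp i hi)
  · intro i hi h
    rcases adj_cases hT z (hp (i + 1) (by omega)) with h' | h'
    · exact h'
    · exfalso
      have e := closer_unique hT (hp i (by omega)) (hp (i + 1) (by omega)).symm h h'
      have a1 := geod_le hT hp 0 i (by omega)
      have a2 := geod_le hT hp (i + 2) (T.dist x y - (i + 2)) (by omega)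
      rw [show i + 2 + (T.dist x y - (i + 2)) = T.dist x y by omega, hn] at a2
      rw [zero_add, h0] at a1
      have := tri hT x (p i) y
      rw [show i + 1 + 1 = i + 2 by omega] at e
      rw [← e] at a2
      omega

theorem four (hT : T.IsTree) (x y z w : X) :
    T.dist x y + T.dist z w ≤ T.dist x z + T.dist y w ∨
    T.dist x y + T.dist z w ≤ T.dist x w + T.dist y z := by
  obtain ⟨p, h0, hn, hp⟩ := exists_geod hT x y
  obtain ⟨s, hs, c, hc⟩ := proj hT x y h0 hn hp z
  obtain ⟨t, ht, e, he⟩ := proj hT x y h0 hn hp w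
  have a1 := hc 0 (by omega)
  have a2 := hc _ le_rfl
  have b1 := he 0 (by omega)
  have b2 := he _ le_rfl
  have a3 := hc s hs
  have b3 := hc t ht
  have b4 := he t ht
  have := tri hT z (p t) w
  rw [SimpleGraph.dist_comm (u := p t)] at this
  rw [h0, SimpleGraph.dist_comm (u := z)] at a1
  rw [h0, SimpleGraph.dist_comm (u := w)] at b1
  rw [hn, SimpleGraph.dist_comm (u := z)] at a2
  rw [hn, SimpleGraph.dist_comm (u := w)] at b2
  simp only [abs] at *
  omega

theorem dist_zero (hT : T.IsTree) {x y : X} (h : T.dist x y = 0) : x = y :=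
  hT.connected.dist_eq_zero_iff.1 h

theorem parity (hT : T.IsTree) (x y z : X) :
    (T.dist x y + T.dist y z + T.dist x z) % 2 = 0 := by
  obtain ⟨p, h0, hn, hp⟩ := exists_geod hT x y
  obtain ⟨s, hs, c, hc⟩ := proj hT x y h0 hn hp z
  have a1 := hc 0 (by omega)
  have a2 := hc _ le_rfl
  rw [h0, SimpleGraph.dist_comm (u := z)] at a1
  rw [hn, SimpleGraph.dist_comm (u := z)] at a2
  simp only [abs] at *
  omega

/-- points on geodesics exist -/
theorem exists_pt (hT : T.IsTree) (x y : X) (t : ℕ) (ht : t ≤ T.dist x y) :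
    ∃ u, T.dist x u = t ∧ T.dist u y = T.dist x y - t := by
  obtain ⟨p, h0, hn, hp⟩ := exists_geod hT x y
  have a1 := geod_le hT hp 0 t (by omega)
  have a2 := geod_le hT hp t (T.dist x y - t) (by omega)
  rw [show t + (T.dist x y - t) = T.dist x y by omega, hn] at a2
  rw [zero_add, h0] at a1
  have := tri hT x (p t) y
  exact ⟨p t, by omega, by omega⟩

/-- uniqueness: two points between `x` and `y` -/
theorem between_dist (hT : T.IsTree) {x y u v : X} (hu : T.dist x u + T.dist u y = T.dist x y)
    (hv : T.dist x v + T.dist v y = T.dist x y) :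
    (T.dist u v : ℤ) = |(T.dist x u : ℤ) - T.dist x v| := by
  have h := four hT x y u v
  have t1 := tri hT x u v
  have t2 := tri hT x v u
  have c1 := SimpleGraph.dist_comm (G := T) (u := v) (v := u)
  have c2 := SimpleGraph.dist_comm (G := T) (u := y) (v := u)
  have c3 := SimpleGraph.dist_comm (G := T) (u := y) (v := v)
  simp only [abs] at *
  omega

theorem between_unique (hT : T.IsTree) {x y u v : X} (hu : T.dist x u + T.dist u y = T.dist x y)
    (hv : T.dist x v + T.dist v y = T.dist x y) (h : T.dist x u = T.dist x v) : u = v := by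
  have := between_dist hT hu hv
  rw [h] at this
  exact dist_zero hT (by simpa using this)

/-- distances from `z` to the points of the segment `[x,y]` -/
theorem proj' (hT : T.IsTree) (x y z : X) :
    ∃ t0 : ℕ, t0 ≤ T.dist x y ∧ ∃ c : ℤ, 0 ≤ c ∧ ∀ u, T.dist x u + T.dist u y = T.dist x y →
      (T.dist z u : ℤ) = c + |(T.dist x u : ℤ) - t0| := by
  obtain ⟨p, h0, hn, hp⟩ := exists_geod hT x y
  obtain ⟨s, hs, c, hc⟩ := proj hT x y h0 hn hp z
  refine ⟨s, hs, c, ?_, ?_⟩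
  · have := hc s hs
    simp at this; omega
  intro u hu
  have e : u = p (T.dist x u) := by
    set t := T.dist x u with ht
    have a1 := geod_le hT hp 0 t (by omega)
    have a2 := geod_le hT hp t (T.dist x y - t) (by omega)
    rw [show t + (T.dist x y - t) = T.dist x y by omega, hn] at a2
    rw [zero_add, h0] at a1
    have := tri hT x (p t) y
    exact between_unique hT hu (by omega) (by omega)
  have := hc (T.dist x u) (by omega)
  rw [← e] at this
  exact this

end TreeMetric

namespace TreeAction

open TreeMetric

variable {G : Type*} [Group G] (A : TreeAction G)

theorem act_mul (g h : G) (x : A.V) : A.act (g * h) x = A.act g (A.act h x) := by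
  rw [map_mul]; rfl

theorem act_one (x : A.V) : A.act 1 x = x := by
  rw [map_one]; rfl

theorem act_inv_act (g : G) (x : A.V) : A.act g⁻¹ (A.act g x) = x := by
  rw [← act_mul, inv_mul_cancel, act_one]

theorem act_act_inv (g : G) (x : A.V) : A.act g (A.act g⁻¹ x) = x := by
  rw [← act_mul, mul_inv_cancel, act_one]

theorem dist_act_le (g : G) (x y : A.V) : A.T.dist (A.act g x) (A.act g y) ≤ A.T.dist x y := by
  obtain ⟨w, hw⟩ := A.isTree.connected.exists_walk_length_eq_dist x y
  have := SimpleGraph.dist_le (w.map (A.act g).toHom)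
  rw [SimpleGraph.Walk.length_map, hw] at this
  exact this

theorem dist_act (g : G) (x y : A.V) : A.T.dist (A.act g x) (A.act g y) = A.T.dist x y := by
  refine le_antisymm (A.dist_act_le g x y) ?_
  have := A.dist_act_le g⁻¹ (A.act g x) (A.act g y)
  simpa [act_inv_act] using this

theorem dist_inv_left (g : G) (x y : A.V) : A.T.dist (A.act g⁻¹ x) y = A.T.dist x (A.act g y) := by
  rw [← A.dist_act g, act_act_inv]

/-- a subgroup has bounded orbits -/
def Bdd (H : Subgroup G) : Prop := ∃ (x : A.V) (B : ℕ), ∀ h ∈ H, A.T.dist x (A.act h x) ≤ B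

variable {A}

theorem Bdd.any {H : Subgroup G} (h : A.Bdd H) (y : A.V) :
    ∃ B : ℕ, ∀ h ∈ H, A.T.dist y (A.act h y) ≤ B := by
  obtain ⟨x, B, hB⟩ := h
  refine ⟨2 * A.T.dist x y + B, fun h hh => ?_⟩
  have h1 := tri A.isTree y x (A.act h y)
  have h2 := tri A.isTree x (A.act h x) (A.act h y)
  have h3 := hB h hh
  rw [A.dist_act] at h2
  have := SimpleGraph.dist_comm (G := A.T) (u := x) (v := y)
  omega

theorem Bdd.mono {H K : Subgroup G} (h : A.Bdd K) (hHK : H ≤ K) : A.Bdd H := by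
  obtain ⟨x, B, hB⟩ := h
  exact ⟨x, B, fun h hh => hB h (hHK hh)⟩

theorem Bdd.of_finite (A : TreeAction G) {H : Subgroup G} (h : Finite H) : A.Bdd H := by
  obtain ⟨x⟩ := A.isTree.connected.nonempty
  have : (Set.range fun h : H => A.T.dist x (A.act h x)).Finite := Set.finite_range _
  obtain ⟨B, hB⟩ := this.bddAbove
  exact ⟨x, B, fun h hh => hB ⟨⟨h, hh⟩, rfl⟩⟩

theorem Bdd.sup_of_comm {H K : Subgroup G} (hH : A.Bdd H) (hK : A.Bdd K)
    (hc : ∀ h ∈ H, ∀ k ∈ K, h * k = k * h) : A.Bdd (H ⊔ K) := by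
  obtain ⟨x, B, hB⟩ := hH
  obtain ⟨C, hC⟩ := hK.any x
  refine ⟨x, B + C, fun g hg => ?_⟩
  let S : Subgroup G :=
    { carrier := {g | ∃ h ∈ H, ∃ k ∈ K, g = h * k}
      one_mem' := ⟨1, H.one_mem, 1, K.one_mem, by simp⟩
      mul_mem' := by
        rintro _ _ ⟨h, hh, k, hk, rfl⟩ ⟨h', hh', k', hk', rfl⟩
        refine ⟨h * h', H.mul_mem hh hh', k * k', K.mul_mem hk hk', ?_⟩
        have := hc h' hh' k hk
        rw [mul_assoc, ← mul_assoc k, ← this]; group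
      inv_mem' := by
        rintro _ ⟨h, hh, k, hk, rfl⟩
        refine ⟨h⁻¹, H.inv_mem hh, k⁻¹, K.inv_mem hk, ?_⟩
        rw [hc h hh k hk]; group }
  have hS : H ⊔ K ≤ S := sup_le (fun h hh => ⟨h, hh, 1, K.one_mem, by simp⟩)
    (fun k hk => ⟨1, H.one_mem, k, hk, by simp⟩)
  obtain ⟨h, hh, k, hk, rfl⟩ := hS hg
  have h1 := tri A.isTree x (A.act h x) (A.act (h * k) x)
  rw [act_mul, A.dist_act] at h1
  have := hB h hh
  have := hC k hk
  rw [act_mul]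
  omega

/-- bounded orbits give an almost fixed vertex -/
theorem Bdd.center {H : Subgroup G} (hH : A.Bdd H) :
    ∃ z : A.V, ∀ h ∈ H, A.T.dist z (A.act h z) ≤ 1 := by
  classical
  obtain ⟨x, B, hB⟩ := hH
  let P : ℕ → Prop := fun n => ∃ z, ∀ h ∈ H, A.T.dist z (A.act h x) ≤ n
  have hP : ∃ n, P n := ⟨B, x, hB⟩
  obtain ⟨z, hz⟩ := Nat.find_spec hP
  have hmin : ∀ m < Nat.find hP, ¬ P m := fun m hm => Nat.find_min hP hm
  set n := Nat.find hP with hn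
  refine ⟨z, fun h hh => ?_⟩
  by_contra hlt
  push Not at hlt
  have hz' : ∀ k ∈ H, A.T.dist (A.act h z) (A.act k x) ≤ n := by
    intro k hk
    have := hz (h⁻¹ * k) (H.mul_mem (H.inv_mem hh) hk)
    rwa [act_mul, ← A.dist_act h, act_act_inv] at this
  have hn1 : 1 ≤ n := by
    by_contra h0
    have h1 := hz 1 H.one_mem
    have h2 := hz' 1 H.one_mem
    rw [act_one] at h1 h2
    have := tri A.isTree z x (A.act h z)
    rw [SimpleGraph.dist_comm (u := x)] at this
    omega
  obtain ⟨u, hu1, hu2⟩ := exists_pt A.isTree z (A.act h z) 1 (by omega)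
  refine hmin (n - 1) (by omega) ⟨u, fun k hk => ?_⟩
  obtain ⟨t0, ht0, c, hc0, hc⟩ := proj' A.isTree z (A.act h z) (A.act k x)
  have e1 := hc z (by simp)
  have e2 := hc (A.act h z) (by simp)
  have e3 := hc u (by omega)
  have b1 := hz k hk
  have b2 := hz' k hk
  rw [SimpleGraph.dist_comm] at b1 b2
  rw [SimpleGraph.dist_comm]
  rw [hu1] at e3
  simp only [abs, SimpleGraph.dist_self] at *
  omega

theorem disp_parity (A : TreeAction G) (g : G) (x y : A.V) :
    A.T.dist x (A.act g x) % 2 = A.T.dist y (A.act g y) % 2 := by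
  have h1 := parity A.isTree x y (A.act g x)
  have h2 := parity A.isTree y (A.act g x) (A.act g y)
  rw [A.dist_act] at h2
  omega

theorem disp_mul_parity (A : TreeAction G) (g h : G) (x : A.V) :
    A.T.dist x (A.act (g * h) x) % 2 =
      (A.T.dist x (A.act g x) + A.T.dist x (A.act h x)) % 2 := by
  have h1 := parity A.isTree x (A.act g x) (A.act (g * h) x)
  rw [act_mul, A.dist_act] at h1
  rw [act_mul]
  omega

/-- The shift lemma -/
theorem _root_.TreeMetric.shift {X : Type} {T : SimpleGraph X} (hT : T.IsTree)
    {x y x' y' u' : X} {r : ℕ} (hxy : T.dist x' y' = T.dist x y) (hx : T.dist x x' ≤ r)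
    (hy : T.dist y y' ≤ r) (hu : T.dist x' u' + T.dist u' y' = T.dist x y)
    (h1 : r < T.dist x' u') (h2 : r < T.dist u' y') :
    T.dist x u' + T.dist u' y = T.dist x y ∧
      T.dist x u' + T.dist x y = T.dist x' u' + T.dist x y' := by
  have f1 := four hT x u' x' y'
  have f2 := four hT y u' x y'
  have c1 := SimpleGraph.dist_comm (G := T) (u := u') (v := x')
  have c2 := SimpleGraph.dist_comm (G := T) (u := u') (v := x)
  have c3 := SimpleGraph.dist_comm (G := T) (u := u') (v := y)
  have c4 := SimpleGraph.dist_comm (G := T) (u := x) (v := y)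
  have c5 := SimpleGraph.dist_comm (G := T) (u := x) (v := x')
  have c6 := SimpleGraph.dist_comm (G := T) (u := y) (v := y')
  have t1 := tri hT x u' y'
  have t2 := tri hT x' x u'
  have t3 := tri hT y' y u'
  have t4 := tri hT x u' y
  have c7 := SimpleGraph.dist_comm (G := T) (u := u') (v := y')
  omega

theorem act_shift (A : TreeAction G) {x y u : A.V} {r : ℕ} {g : G}
    (hx : A.T.dist x (A.act g x) ≤ r)
    (hy : A.T.dist y (A.act g y) ≤ r) (hu : A.T.dist x u + A.T.dist u y = A.T.dist x y)
    (h1 : r < A.T.dist x u) (h2 : r < A.T.dist u y) :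
    A.T.dist x (A.act g u) + A.T.dist (A.act g u) y = A.T.dist x y ∧
      A.T.dist x (A.act g u) + A.T.dist x y = A.T.dist x u + A.T.dist x (A.act g y) := by
  have := shift A.isTree (x := x) (y := y) (x' := A.act g x) (y' := A.act g y) (u' := A.act g u)
    (r := r)
  simp only [A.dist_act] at this
  exact this trivial hx hy hu h1 h2

theorem same_shift (A : TreeAction G) {x y u : A.V} {r : ℕ} {g g' : G}
    (hx : A.T.dist x (A.act g x) ≤ r) (hy : A.T.dist y (A.act g y) ≤ r)
    (hx' : A.T.dist x (A.act g' x) ≤ r) (hy' : A.T.dist y (A.act g' y) ≤ r)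
    (he : A.T.dist x (A.act g y) = A.T.dist x (A.act g' y))
    (hu : A.T.dist x u + A.T.dist u y = A.T.dist x y)
    (h1 : r < A.T.dist x u) (h2 : r < A.T.dist u y) : A.act g u = A.act g' u := by
  obtain ⟨a1, a2⟩ := A.act_shift hx hy hu h1 h2
  obtain ⟨b1, b2⟩ := A.act_shift hx' hy' hu h1 h2
  exact between_unique A.isTree a1 b1 (by omega)

theorem elliptic_shift (A : TreeAction G) {x y z : A.V} {r : ℕ} {g : G}
    (hx : A.T.dist x (A.act g x) ≤ r) (hy : A.T.dist y (A.act g y) ≤ r)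
    (hz : A.act g (A.act g z) = z) (hn : 6 * r + 10 ≤ A.T.dist x y) :
    A.T.dist x (A.act g y) = A.T.dist x y := by
  obtain ⟨t0, ht0, c, hc0, hc⟩ := proj' A.isTree x y z
  have key : ∀ t, t = 3 * r + 3 ∨ t = 3 * r + 4 → ∃ u : A.V, A.T.dist x u = t ∧
      (A.T.dist z u : ℤ) = c + |(t : ℤ) - t0| ∧
      (A.T.dist z u : ℤ) =
        c + |(t : ℤ) + 2 * (A.T.dist x (A.act g y) - A.T.dist x y) - t0| := by
    intro t ht
    obtain ⟨u, hu1, hu2⟩ := exists_pt A.isTree x y t (by omega)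
    have e1 := hc u (by omega)
    obtain ⟨a1, a2⟩ := A.act_shift hx hy (u := u) (by omega) (by omega) (by omega)
    have q1 := tri A.isTree x y (A.act g y)
    have q2 := tri A.isTree x (A.act g y) y
    rw [SimpleGraph.dist_comm (u := A.act g y) (v := y)] at q2
    obtain ⟨b1, b2⟩ := A.act_shift hx hy (u := A.act g u) (by omega) (by omega) (by omega)
    have e2 := hc _ b1
    have e3 : A.T.dist z (A.act g (A.act g u)) = A.T.dist z u := by
      conv_lhs => rw [← hz]
      rw [A.dist_act, A.dist_act]
    refine ⟨u, hu1, by rw [e1, hu1], ?_⟩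
    rw [← e3, e2]
    congr 2
    omega
  obtain ⟨u, hu, h1, h2⟩ := key _ (Or.inl rfl)
  obtain ⟨v, hv, h3, h4⟩ := key _ (Or.inr rfl)
  simp only [abs] at *
  push_cast at *
  omega

end TreeAction

namespace TreeAction

open TreeMetric

variable {G : Type*} [Group G] {A : TreeAction G}

theorem fiber_card {k C : ℕ} (hac : A.KCAcylindrical k C) {x y : A.V} {r e : ℕ}
    (hn : 2 * r + 2 + k ≤ A.T.dist x y) (F : Finset G)
    (hx : ∀ g ∈ F, A.T.dist x (A.act g x) ≤ r) (hy : ∀ g ∈ F, A.T.dist y (A.act g y) ≤ r)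
    (he : ∀ g ∈ F, A.T.dist x (A.act g y) = e) : F.card ≤ C := by
  classical
  rcases F.eq_empty_or_nonempty with rfl | ⟨g0, hg0⟩
  · simp
  obtain ⟨u, hu1, hu2⟩ := exists_pt A.isTree x y (r + 1) (by omega)
  obtain ⟨v, hv1, hv2⟩ := exists_pt A.isTree x y (A.T.dist x y - (r + 1)) (by omega)
  have huv : k ≤ A.T.dist u v := by
    have := between_dist A.isTree (x := x) (y := y) (u := u) (v := v) (by omega) (by omega)
    simp only [abs] at this
    omega
  obtain ⟨hf, hcard⟩ := hac u v huv
  have h1 : (F.image (fun g => g0⁻¹ * g)).card = F.card :=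
    Finset.card_image_of_injective _ (mul_right_injective _)
  rw [← h1, ← Set.ncard_coe_finset]
  refine le_trans (Set.ncard_le_ncard ?_ hf) hcard
  intro a ha
  simp only [Finset.coe_image, Set.mem_image, Finset.mem_coe] at ha
  obtain ⟨g, hg, rfl⟩ := ha
  constructor
  · rw [act_mul, A.same_shift (u := u) (hx g hg) (hy g hg) (hx g0 hg0) (hy g0 hg0)
      (by rw [he g hg, he g0 hg0]) (by omega) (by omega) (by omega), act_inv_act]
  · rw [act_mul, A.same_shift (u := v) (hx g hg) (hy g hg) (hx g0 hg0) (hy g0 hg0)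
      (by rw [he g hg, he g0 hg0]) (by omega) (by omega) (by omega), act_inv_act]

theorem sq_fix_of_bdd {g : G} (h : A.Bdd (Subgroup.zpowers g)) :
    ∃ z : A.V, A.act g (A.act g z) = z := by
  obtain ⟨z, hz⟩ := h.center
  refine ⟨z, ?_⟩
  rw [← act_mul]
  have h1 := hz (g * g) (mul_mem (Subgroup.mem_zpowers g) (Subgroup.mem_zpowers g))
  have h2 := disp_mul_parity A g g z
  exact (dist_zero A.isTree (by omega)).symm

theorem disp_conj (g h : G) (hc : g * h = h * g) (x : A.V) :
    A.T.dist (A.act h x) (A.act g (A.act h x)) = A.T.dist x (A.act g x) := by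
  rw [← act_mul, hc, act_mul, dist_act]

theorem exists_lox {k C : ℕ} (hac : A.KCAcylindrical k C) {H K : Subgroup G}
    (hc : ∀ h ∈ H, ∀ g ∈ K, h * g = g * h) (hH : ¬ A.Bdd H) (hK : Infinite K) :
    ∃ g ∈ K, ¬ A.Bdd (Subgroup.zpowers g) := by
  classical
  by_contra hcon
  push Not at hcon
  obtain ⟨o⟩ := A.isTree.connected.nonempty
  obtain ⟨F0, hF0⟩ := Infinite.exists_subset_card_eq K (C + 1)
  let F : Finset G := F0.image Subtype.val
  have hFc : F.card = C + 1 := by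
    rw [← hF0]; exact Finset.card_image_of_injective _ Subtype.val_injective
  have hFK : ∀ g ∈ F, g ∈ K := by
    intro g hg
    obtain ⟨a, -, rfl⟩ := Finset.mem_image.1 hg
    exact a.2
  let r := F.sup (fun g => A.T.dist o (A.act g o))
  have hr : ∀ g ∈ F, A.T.dist o (A.act g o) ≤ r := fun g hg =>
    Finset.le_sup (f := fun g => A.T.dist o (A.act g o)) hg
  have : ∃ h ∈ H, 6 * r + 10 + k < A.T.dist o (A.act h o) := by
    by_contra h
    push Not at h
    exact hH ⟨o, _, h⟩
  obtain ⟨h, hh, hn⟩ := this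
  have hr' : ∀ g ∈ F, A.T.dist (A.act h o) (A.act g (A.act h o)) ≤ r := by
    intro g hg
    rw [disp_conj g h (hc h hh g (hFK g hg)).symm]
    exact hr g hg
  have := fiber_card hac (x := o) (y := A.act h o) (r := r) (e := A.T.dist o (A.act h o))
    (by omega) F hr hr' (by
      intro g hg
      obtain ⟨z, hz⟩ := sq_fix_of_bdd (hcon g (hFK g hg))
      exact A.elliptic_shift (hr g hg) (hr' g hg) hz (by omega))
  omega

theorem disp_mul_le (A : TreeAction G) (g h : G) (x : A.V) : A.T.dist x (A.act (g * h) x) ≤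
    A.T.dist x (A.act g x) + A.T.dist x (A.act h x) := by
  have := tri A.isTree x (A.act g x) (A.act (g * h) x)
  rw [act_mul, A.dist_act] at this
  rw [act_mul]; omega

theorem disp_pow_le (A : TreeAction G) (g : G) (x : A.V) (n : ℕ) :
    A.T.dist x (A.act (g ^ n) x) ≤ n * A.T.dist x (A.act g x) := by
  induction n with
  | zero => simp [act_one]
  | succ n ih =>
    have := A.disp_mul_le (g ^ n) g x
    rw [← pow_succ] at this
    rw [Nat.add_mul]; omega

theorem lox_order {g : G} (h : ¬ A.Bdd (Subgroup.zpowers g)) : Function.Injective (fun n : ℕ => g ^ n) := by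
  rw [injective_pow_iff_not_isOfFinOrder]
  intro hf
  apply h
  apply Bdd.of_finite
  exact finite_zpowers.2 hf

theorem no_lox_pair {k C : ℕ} (hC : 1 ≤ C) (hac : A.KCAcylindrical k C) {h g : G}
    (hcomm : h * g = g * h) (hd : Subgroup.zpowers h ⊓ Subgroup.zpowers g = ⊥)
    (hh : ¬ A.Bdd (Subgroup.zpowers h)) (hg : ¬ A.Bdd (Subgroup.zpowers g)) : False := by
  classical
  obtain ⟨o⟩ := A.isTree.connected.nonempty
  set D := A.T.dist o (A.act h o) + A.T.dist o (A.act g o) with hD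
  set M := (2 * D + 1) * C with hM
  have hM1 : 1 ≤ M := by rw [hM]; nlinarith
  set r := M * D with hr
  let f : ℕ × ℕ → G := fun p => h ^ p.1 * g ^ p.2
  have hfinj : Function.Injective f := by
    rintro ⟨i, j⟩ ⟨i', j'⟩ heq
    simp only [f] at heq
    have e : (h ^ i')⁻¹ * h ^ i = g ^ j' * (g ^ j)⁻¹ := by
      rw [eq_mul_inv_iff_mul_eq, mul_assoc, heq]; group
    have m : (h ^ i')⁻¹ * h ^ i ∈ Subgroup.zpowers h ⊓ Subgroup.zpowers g := by
      refine Subgroup.mem_inf.2 ⟨?_, ?_⟩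
      · exact mul_mem (inv_mem (pow_mem (Subgroup.mem_zpowers h) _))
          (pow_mem (Subgroup.mem_zpowers h) _)
      · rw [e]
        exact mul_mem (pow_mem (Subgroup.mem_zpowers g) _)
          (inv_mem (pow_mem (Subgroup.mem_zpowers g) _))
    rw [hd, Subgroup.mem_bot] at m
    have e1 : h ^ i = h ^ i' := by rw [inv_mul_eq_one] at m; exact m.symm
    rw [m] at e
    have e2 : g ^ j' = g ^ j := by rw [eq_comm, mul_inv_eq_one] at e; exact e
    rw [lox_order hh e1, lox_order hg e2]
  let P := Finset.range (M + 1) ×ˢ Finset.range (M + 1)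
  let F := P.image f
  have hFc : F.card = (M + 1) * (M + 1) := by
    rw [Finset.card_image_of_injective _ hfinj]; simp [P]
  have hx : ∀ a ∈ F, A.T.dist o (A.act a o) ≤ r := by
    intro a ha
    obtain ⟨⟨i, j⟩, hp, rfl⟩ := Finset.mem_image.1 ha
    simp only [P, Finset.mem_product, Finset.mem_range] at hp
    have h1 := A.disp_mul_le (h ^ i) (g ^ j) o
    have h2 := A.disp_pow_le h o i
    have h3 := A.disp_pow_le g o j
    have h4 : i * A.T.dist o (A.act h o) ≤ M * A.T.dist o (A.act h o) :=
      Nat.mul_le_mul_right _ (by omega)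
    have h5 : j * A.T.dist o (A.act g o) ≤ M * A.T.dist o (A.act g o) :=
      Nat.mul_le_mul_right _ (by omega)
    have h6 : r = M * A.T.dist o (A.act h o) + M * A.T.dist o (A.act g o) := by
      rw [hr, hD]; ring
    simp only [f]
    omega
  have : ∃ q ∈ Subgroup.zpowers g, 2 * r + 2 + k < A.T.dist o (A.act q o) := by
    by_contra h
    push Not at h
    exact hg ⟨o, _, h⟩
  obtain ⟨q, hq, hn⟩ := this
  obtain ⟨m, rfl⟩ := Subgroup.mem_zpowers_iff.1 hq
  set y := A.act (g ^ m) o with hy0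
  have hy : ∀ a ∈ F, A.T.dist y (A.act a y) ≤ r := by
    intro a ha
    have hxa := hx a ha
    obtain ⟨⟨i, j⟩, hp, rfl⟩ := Finset.mem_image.1 ha
    rw [hy0, disp_conj _ _ _]
    · exact hxa
    · have c1 : Commute h g := hcomm
      exact ((c1.pow_left i).zpow_right m).mul_left (((Commute.refl g).pow_left j).zpow_right m)
  let φ : G → ℕ := fun a => A.T.dist o (A.act a y)
  have hmaps : ∀ a ∈ F, φ a ∈ Finset.Icc (A.T.dist o y - r) (A.T.dist o y + r) := by
    intro a ha
    have h1 := hy a ha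
    have h2 := tri A.isTree o y (A.act a y)
    have h3 := tri A.isTree o (A.act a y) y
    rw [SimpleGraph.dist_comm (u := A.act a y) (v := y)] at h3
    rw [Finset.mem_Icc]
    simp only [φ]
    omega
  have hcard : (Finset.Icc (A.T.dist o y - r) (A.T.dist o y + r)).card * C < F.card := by
    rw [hFc, Nat.card_Icc]
    have : A.T.dist o y + r + 1 - (A.T.dist o y - r) = 2 * r + 1 := by omega
    rw [this, hr]
    have h1 : (2 * (M * D) + 1) * C ≤ M * ((2 * D + 1) * C) := by nlinarith
    rw [← hM] at h1
    nlinarith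
  obtain ⟨e, he, hlt⟩ := Finset.exists_lt_card_fiber_of_mul_lt_card_of_maps_to hmaps hcard
  have := fiber_card hac (x := o) (y := y) (r := r) (e := e) (by omega) (F.filter (fun a => φ a = e))
    (fun a ha => hx a (Finset.mem_filter.1 ha).1) (fun a ha => hy a (Finset.mem_filter.1 ha).1)
    (fun a ha => (Finset.mem_filter.1 ha).2)
  omega

/-- In an acylindrical action, an infinite subgroup commuting with an infinite subgroup
(with trivial intersection) has bounded orbits. -/
theorem bdd_of_commuting (hA : A.Acylindrical) {H K : Subgroup G}
    (hc : ∀ h ∈ H, ∀ g ∈ K, h * g = g * h) (hd : H ⊓ K = ⊥) (hH : Infinite H) (hK : Infinite K) :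
    A.Bdd H := by
  obtain ⟨k, C, hC, hac⟩ := hA
  by_contra hb
  obtain ⟨g, hg, hgl⟩ := exists_lox hac hc hb hK
  have hKb : ¬ A.Bdd K := fun h => hgl (h.mono (by simpa using hg))
  obtain ⟨h, hh, hhl⟩ := exists_lox hac (fun a ha b hb => (hc b hb a ha).symm) hKb hH
  refine no_lox_pair hC hac (hc h hh g hg) ?_ hhl hgl
  rw [eq_bot_iff, ← hd]
  exact inf_le_inf (by simpa using hh) (by simpa using hg)

theorem fix_between {S : Subgroup G} {x y u : A.V} (hx : ∀ h ∈ S, A.act h x = x)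
    (hy : ∀ h ∈ S, A.act h y = y) (hu : A.T.dist x u + A.T.dist u y = A.T.dist x y) :
    ∀ h ∈ S, A.act h u = u := by
  intro h hh
  have e1 : A.T.dist x (A.act h u) = A.T.dist x u := by
    conv_lhs => rw [← hx h hh]
    rw [A.dist_act]
  have e2 : A.T.dist (A.act h u) y = A.T.dist u y := by
    conv_lhs => rw [← hy h hh]
    rw [A.dist_act]
  exact between_unique A.isTree (by omega) hu e1

/-- the gate property of a closest point -/
theorem gate {S : Subgroup G} {o s q : A.V} (hs : ∀ h ∈ S, A.act h s = s)
    (hmin : ∀ t : A.V, (∀ h ∈ S, A.act h t = t) → A.T.dist o s ≤ A.T.dist o t)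
    (hq : ∀ h ∈ S, A.act h q = q) : A.T.dist o s + A.T.dist s q = A.T.dist o q := by
  obtain ⟨t0, ht0, c, hc0, hc⟩ := proj' A.isTree s q o
  obtain ⟨u, hu1, hu2⟩ := exists_pt A.isTree s q t0 ht0
  have h1 := hmin u (fix_between hs hq (by omega))
  have e1 := hc u (by omega)
  have e2 := hc s (by simp)
  have e3 := hc q (by simp)
  rw [hu1] at e1
  simp only [abs, SimpleGraph.dist_self] at *
  omega

theorem helly {ι : Type*} [Finite ι] [Nonempty ι] (H : ι → Subgroup G)
    (hp : ∀ i j, ∃ z : A.V, (∀ h ∈ H i, A.act h z = z) ∧ ∀ h ∈ H j, A.act h z = z) :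
    ∃ z : A.V, ∀ i, ∀ h ∈ H i, A.act h z = z := by
  classical
  obtain ⟨o⟩ := A.isTree.connected.nonempty
  have hs : ∀ i, ∃ s : A.V, (∀ h ∈ H i, A.act h s = s) ∧
      ∀ t : A.V, (∀ h ∈ H i, A.act h t = t) → A.T.dist o s ≤ A.T.dist o t := by
    intro i
    have hex : ∃ n, ∃ s : A.V, (∀ h ∈ H i, A.act h s = s) ∧ A.T.dist o s = n := by
      obtain ⟨z, hz, -⟩ := hp i i
      exact ⟨_, z, hz, rfl⟩
    obtain ⟨s, hs1, hs2⟩ := Nat.find_spec hex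
    exact ⟨s, hs1, fun t ht => by rw [hs2]; exact Nat.find_min' hex ⟨t, ht, rfl⟩⟩
  choose s hs1 hs2 using hs
  obtain ⟨i, hi⟩ := Finite.exists_max (fun i => A.T.dist o (s i))
  refine ⟨s i, fun j => ?_⟩
  obtain ⟨q, hq1, hq2⟩ := hp i j
  have g1 := gate (hs1 i) (hs2 i) hq1
  have g2 := gate (hs1 j) (hs2 j) hq2
  have hb := between_dist A.isTree g2 g1
  refine fix_between (hs1 j) hq2 ?_
  have := hi j
  simp only [abs] at hb
  omega

theorem odd_edge {g : G} {z z' : A.V} (h1 : A.T.dist z (A.act g z) = 1)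
    (h2 : A.T.dist z' (A.act g z') = 1) (hz : A.act g (A.act g z) = z)
    (hz' : A.act g (A.act g z') = z') : z' = z ∨ z' = A.act g z := by
  have p := parity A.isTree z' z (A.act g z)
  have c1 := SimpleGraph.dist_comm (G := A.T) (u := z) (v := z')
  have e1 : A.T.dist (A.act g z) (A.act g z') = A.T.dist z z' := A.dist_act g z z'
  have e2 : A.T.dist z (A.act g z') = A.T.dist (A.act g z) z' := by
    rw [← A.dist_act g, hz']
  have c2 := SimpleGraph.dist_comm (G := A.T) (u := A.act g z) (v := z')
  have c3 := SimpleGraph.dist_comm (G := A.T) (u := A.act g z') (v := z)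
  have c4 := SimpleGraph.dist_comm (G := A.T) (u := A.act g z') (v := A.act g z)
  have c5 := SimpleGraph.dist_comm (G := A.T) (u := A.act g z') (v := z')
  have f1 := four A.isTree z z' (A.act g z) (A.act g z')
  have f2 := four A.isTree z (A.act g z') (A.act g z) z'
  have : A.T.dist z' z = 0 ∨ A.T.dist z' (A.act g z) = 0 := by omega
  rcases this with h | h
  · exact Or.inl (dist_zero A.isTree h)
  · exact Or.inr (dist_zero A.isTree h)

/-- Finitely many subgroups, pairwise generating bounded subgroups, generate a bounded subgroup. -/
theorem bdd_of_pairs {ι : Type*} [Finite ι] (H : ι → Subgroup G)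
    (hp : ∀ i j, A.Bdd (H i ⊔ H j)) : A.Bdd (⨆ i, H i) := by
  obtain ⟨o⟩ := A.isTree.connected.nonempty
  rcases isEmpty_or_nonempty ι with hι | hι
  · rw [iSup_of_empty]
    exact Bdd.of_finite A inferInstance
  by_cases hev : ∀ i, ∀ h ∈ H i, A.T.dist o (A.act h o) % 2 = 0
  · obtain ⟨z, hz⟩ := helly (A := A) H (fun i j => by
      obtain ⟨z, hz⟩ := (hp i j).center
      have key : ∀ k, H k ≤ H i ⊔ H j → ∀ h ∈ H k, A.act h z = z := by
        intro k hk h hh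
        have h1 := hev k h hh
        have h2 := hz h (hk hh)
        rw [A.disp_parity h o z] at h1
        exact (dist_zero A.isTree (by omega)).symm
      exact ⟨z, key i le_sup_left, key j le_sup_right⟩)
    refine ⟨z, 0, fun g hg => ?_⟩
    have : A.act g z = z := by
      refine Subgroup.iSup_induction H (C := fun g => A.act g z = z) hg hz (A.act_one z) ?_
      intro a b ha hb
      rw [act_mul, hb, ha]
    rw [this]; simp
  · push Not at hev
    obtain ⟨i0, g, hg, hodd⟩ := hev
    have hodd' : ∀ z, A.T.dist z (A.act g z) % 2 = 1 := fun z => by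
      rw [A.disp_parity g z o]; omega
    have hc : ∀ j, ∃ z : A.V, A.T.dist z (A.act g z) = 1 ∧ A.act g (A.act g z) = z ∧
        ∀ h ∈ H i0 ⊔ H j, A.act h z = z ∨ A.act h z = A.act g z := by
      intro j
      obtain ⟨z, hz⟩ := (hp i0 j).center
      have hgS : g ∈ H i0 ⊔ H j := (le_sup_left : H i0 ≤ _) hg
      have h5 := hodd' z
      have h7 := hz (g * g) (mul_mem hgS hgS)
      have h8 := A.disp_mul_parity g g z
      have h9 : z = A.act (g * g) z := dist_zero A.isTree (by omega)
      have h10 := hz g hgS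
      rw [act_mul] at h9
      refine ⟨z, by omega, h9.symm, fun h hh => ?_⟩
      have h1 := hz h hh
      rcases Nat.lt_or_ge (A.T.dist z (A.act h z)) 1 with h2 | h2
      · exact Or.inl (dist_zero A.isTree (by omega)).symm
      · right
        have h3 := hz (g * h) (mul_mem hgS hh)
        have h4 := A.disp_mul_parity g h z
        have h6 : z = A.act (g * h) z := dist_zero A.isTree (by omega)
        rw [act_mul] at h6
        exact (A.act g).injective (h6.symm.trans h9)
    choose c hc1 hc2 hc3 using hc
    have hmain : ∀ j, ∀ h ∈ H j, (A.act h (c i0) = c i0 ∨ A.act h (c i0) = A.act g (c i0)) ∧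
        (A.act h (A.act g (c i0)) = c i0 ∨ A.act h (A.act g (c i0)) = A.act g (c i0)) := by
      intro j h hh
      have hgS : g ∈ H i0 ⊔ H j := (le_sup_left : H i0 ≤ _) hg
      have hhS : h ∈ H i0 ⊔ H j := (le_sup_right : H j ≤ _) hh
      have k1 := hc3 j h hhS
      have k2 := hc3 j (h * g) (mul_mem hhS hgS)
      rw [act_mul] at k2
      rcases odd_edge (hc1 i0) (hc1 j) (hc2 i0) (hc2 j) with e | e
      · rw [e] at k1 k2
        exact ⟨k1, k2⟩
      · rw [e, hc2 i0] at k1 k2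
        exact ⟨k2.symm, k1.symm⟩
    refine ⟨c i0, 1, fun x hx => ?_⟩
    have := Subgroup.iSup_induction H (C := fun h =>
      (A.act h (c i0) = c i0 ∨ A.act h (c i0) = A.act g (c i0)) ∧
        (A.act h (A.act g (c i0)) = c i0 ∨ A.act h (A.act g (c i0)) = A.act g (c i0))) hx hmain
        ⟨Or.inl (A.act_one _), Or.inr (A.act_one _)⟩ (by
          intro a b ha hb
          simp only [act_mul]
          constructor
          · rcases hb.1 with e | e <;> rw [e]
            exacts [ha.1, ha.2]
          · rcases hb.2 with e | e <;> rw [e]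
            exacts [ha.1, ha.2])
    rcases this.1 with e | e <;> rw [e]
    · simp
    · rw [hc1 i0]

end TreeAction

/-- A group presented as an amalgamated product of two of its subgroups. -/
structure Amalgam (G : Type) [Group G] where
  S : Bool → Subgroup G
  C : Subgroup G
  hC : ∀ i, C ≤ S i
  gen : ∀ H : Subgroup G, (∀ i, S i ≤ H) → H = ⊤
  f : G →* Monoid.PushoutI (fun i => Subgroup.inclusion (hC i))
  hf : ∀ i (x : S i), f x = Monoid.PushoutI.of i x

theorem TreeAction.fix_between_one {G : Type*} [Group G] {A : TreeAction G} {s : G} {x y u : A.V}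
    (hx : A.act s x = x) (hy : A.act s y = y)
    (hu : A.T.dist x u + A.T.dist u y = A.T.dist x y) : A.act s u = u := by
  have e1 : A.T.dist x (A.act s u) = A.T.dist x u := by
    conv_lhs => rw [← hx]
    rw [A.dist_act]
  have e2 : A.T.dist (A.act s u) y = A.T.dist u y := by
    conv_lhs => rw [← hy]
    rw [A.dist_act]
  exact TreeMetric.between_unique A.isTree (by omega) hu e1

namespace Amalgam

variable {G : Type} [Group G] (M : Amalgam G)

/-- `R i j g`: `g` is a reduced product with last factor in `S i` and first factor in `S j`. -/
inductive R (i : Bool) : Bool → G → Prop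
  | base (g : G) : g ∈ M.S i → g ∉ M.C → R i i g
  | cons (j : Bool) (a g : G) : R i j g → a ∈ M.S (!j) → a ∉ M.C → R i (!j) (a * g)

def E (i : Bool) (g : G) : Prop := ∃ j, M.R i j g

variable {M}

theorem mul_not_mem {c a : G} (hc : c ∈ M.C) (ha : a ∉ M.C) : c * a ∉ M.C :=
  fun h => ha ((Subgroup.mul_mem_cancel_left _ hc).1 h)

theorem R.smul {i j : Bool} {g c : G} (hc : c ∈ M.C) (h : M.R i j g) : M.R i j (c * g) := by
  cases h with
  | base _ h1 h2 => exact .base _ (mul_mem (M.hC _ hc) h1) (mul_not_mem hc h2)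
  | cons j a g h1 h2 h3 =>
    rw [← mul_assoc]
    exact .cons j _ _ h1 (mul_mem (M.hC _ hc) h2) (mul_not_mem hc h3)

theorem E.smul {i j : Bool} {g a : G} (h : M.E i g) (ha : a ∈ M.S j)
    (hn : ¬ (j = i ∧ g ∈ M.S i)) : M.E i (a * g) := by
  obtain ⟨k, hk⟩ := h
  by_cases hac : a ∈ M.C
  · exact ⟨k, hk.smul hac⟩
  by_cases hjk : j = !k
  · subst hjk
    exact ⟨_, .cons k a g hk ha hac⟩
  have hjk : j = k := by cases j <;> cases k <;> simp_all
  subst hjk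
  cases hk with
  | base _ h1 h2 => exact absurd ⟨rfl, h1⟩ hn
  | cons j' a' g' h1 h2 h3 =>
    rw [← mul_assoc]
    by_cases hc : a * a' ∈ M.C
    · exact ⟨_, h1.smul hc⟩
    · exact ⟨_, .cons _ _ _ h1 (mul_mem ha h2) hc⟩

theorem R.word {i j : Bool} {g : G} (h : M.R i j g) :
    ∃ w : Monoid.CoprodI.Word (fun i => M.S i), w.fstIdx = some j ∧
      Monoid.PushoutI.Reduced (fun i => Subgroup.inclusion (M.hC i)) w ∧
      Monoid.PushoutI.ofCoprodI w.prod = M.f g := by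
  have aux : ∀ i (a : G) (ha : a ∈ M.S i), a ∉ M.C →
      (⟨a, ha⟩ : M.S i) ∉ (Subgroup.inclusion (M.hC i)).range := by
    rintro i a ha hn ⟨x, hx⟩
    apply hn
    have := congrArg Subtype.val hx
    simp only [Subgroup.coe_inclusion] at this
    rw [← this]; exact x.2
  have aux1 : ∀ i (a : G) (ha : a ∈ M.S i), a ∉ M.C → (⟨a, ha⟩ : M.S i) ≠ 1 := by
    intro i a ha hn he
    have := congrArg Subtype.val he
    simp only [Subgroup.coe_one] at this
    exact hn (this ▸ one_mem _)
  induction h with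
  | base g h1 h2 =>
    refine ⟨Monoid.CoprodI.Word.cons (i := i) ⟨g, h1⟩ .empty (by simp [Monoid.CoprodI.Word.fstIdx])
      (aux1 _ _ _ h2), by simp, ?_, ?_⟩
    · intro x hx
      simp only [Monoid.CoprodI.Word.cons, Monoid.CoprodI.Word.empty, List.mem_singleton] at hx
      subst hx
      exact aux _ _ _ h2
    · simp [← M.hf]
  | cons j a g h1 h2 h3 ih =>
    obtain ⟨w, hw1, hw2, hw3⟩ := ih
    refine ⟨Monoid.CoprodI.Word.cons (i := !j) ⟨a, h2⟩ w (by rw [hw1]; simp)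
      (aux1 _ _ _ h3), by simp, ?_, ?_⟩
    · intro x hx
      simp only [Monoid.CoprodI.Word.cons, List.mem_cons] at hx
      rcases hx with rfl | hx
      · exact aux _ _ _ h3
      · exact hw2 _ hx
    · simp [hw3, ← M.hf]

theorem E.not_mem {i : Bool} {g : G} (h : M.E i g) : g ∉ M.C := by
  obtain ⟨j, h⟩ := h
  obtain ⟨w, hw1, hw2, hw3⟩ := h.word
  intro hg
  have := hw2.eq_empty_of_mem_range (fun i => Subgroup.inclusion_injective _) (by
    rw [hw3]
    refine ⟨⟨g, hg⟩, ?_⟩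
    rw [← Monoid.PushoutI.of_apply_eq_base _ true, ← M.hf]; rfl)
  rw [this] at hw1
  simp [Monoid.CoprodI.Word.fstIdx] at hw1

variable (M)

/-- Vertices of the Bass-Serre tree. -/
def Vert : Type := Σ i : Bool, G ⧸ M.S i

def vert (i : Bool) (g : G) : M.Vert := ⟨i, QuotientGroup.mk g⟩

theorem vert_surj (p : M.Vert) : ∃ g, p = M.vert p.1 g := by
  obtain ⟨i, x⟩ := p
  obtain ⟨g, rfl⟩ := QuotientGroup.mk_surjective x
  exact ⟨g, rfl⟩

theorem vert_eq {i j : Bool} {g h : G} : M.vert i g = M.vert j h ↔ i = j ∧ g⁻¹ * h ∈ M.S i := by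
  constructor
  · intro e
    have e1 : i = j := congrArg Sigma.fst e
    subst e1
    refine ⟨rfl, ?_⟩
    have e2 := eq_of_heq (Sigma.mk.inj e).2
    exact QuotientGroup.eq.1 e2
  · rintro ⟨rfl, e⟩
    simp only [vert]
    rw [QuotientGroup.eq.2 e]

def graph : SimpleGraph M.Vert where
  Adj p q := ∃ i g, p = M.vert i g ∧ q = M.vert (!i) g
  symm := ⟨by
    rintro p q ⟨i, g, h1, h2⟩
    exact ⟨!i, g, h2, by simpa using h1⟩⟩
  loopless := ⟨by
    rintro p ⟨i, g, h1, h2⟩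
    have := (M.vert_eq).1 (h1.symm.trans h2)
    simp at this⟩

def smulV (h : G) (p : M.Vert) : M.Vert := ⟨p.1, h • p.2⟩

theorem smulV_vert (h : G) (i : Bool) (g : G) : M.smulV h (M.vert i g) = M.vert i (h * g) := rfl

def actHom : G →* (M.graph ≃g M.graph) where
  toFun h :=
    { toFun := M.smulV h
      invFun := M.smulV h⁻¹
      left_inv := fun p => by
        obtain ⟨g, hg⟩ := M.vert_surj p
        rw [hg, smulV_vert, smulV_vert]; simp
      right_inv := fun p => by
        obtain ⟨g, hg⟩ := M.vert_surj p
        rw [hg, smulV_vert, smulV_vert]; simp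
      map_rel_iff' := by
        intro p q
        constructor
        · rintro ⟨i, g, h1, h2⟩
          refine ⟨i, h⁻¹ * g, ?_, ?_⟩
          · rw [← smulV_vert, ← h1]
            obtain ⟨g, hg⟩ := M.vert_surj p
            change p = M.smulV h⁻¹ (M.smulV h p)
            rw [hg, smulV_vert, smulV_vert]; simp
          · rw [← smulV_vert, ← h2]
            obtain ⟨g, hg⟩ := M.vert_surj q
            change q = M.smulV h⁻¹ (M.smulV h q)
            rw [hg, smulV_vert, smulV_vert]; simp
        · rintro ⟨i, g, rfl, rfl⟩
          exact ⟨i, h * g, rfl, rfl⟩ }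
  map_one' := by
    ext p
    obtain ⟨g, hg⟩ := M.vert_surj p
    change M.smulV 1 p = p
    rw [hg, smulV_vert, one_mul]
  map_mul' a b := by
    ext p
    obtain ⟨g, hg⟩ := M.vert_surj p
    change M.smulV (a * b) p = M.smulV a (M.smulV b p)
    rw [hg, smulV_vert, smulV_vert, smulV_vert, mul_assoc]

theorem actHom_vert (h : G) (i : Bool) (g : G) :
    M.actHom h (M.vert i g) = M.vert i (h * g) := rfl

theorem connected : M.graph.Connected := by
  have key : ∀ g : G, M.graph.Reachable (M.vert true 1) (M.vert true g) := by
    let H : Subgroup G :=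
      { carrier := {g | M.graph.Reachable (M.vert true 1) (M.vert true g)}
        one_mem' := SimpleGraph.Reachable.refl _
        mul_mem' := by
          intro a b ha hb
          refine SimpleGraph.Reachable.trans ha ?_
          have := (SimpleGraph.Iso.reachable_iff (φ := M.actHom a)).2 hb
          simpa [actHom_vert] using this
        inv_mem' := by
          intro a ha
          have := (SimpleGraph.Iso.reachable_iff (φ := M.actHom a⁻¹)).2 ha
          simp only [actHom_vert, mul_one, inv_mul_cancel] at this
          exact this.symm }
    have : H = ⊤ := M.gen H (by
      intro i a ha
      change M.graph.Reachable (M.vert true 1) (M.vert true a)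
      cases i with
      | true =>
        rw [show M.vert true 1 = M.vert true a from M.vert_eq.2 ⟨rfl, by simpa using ha⟩]
      | false =>
        have h1 : M.graph.Adj (M.vert true 1) (M.vert false 1) := ⟨true, 1, rfl, rfl⟩
        have h2 : M.graph.Adj (M.vert true a) (M.vert false a) := ⟨true, a, rfl, rfl⟩
        have h3 : M.vert false 1 = M.vert false a := M.vert_eq.2 ⟨rfl, by simpa using ha⟩
        rw [h3] at h1
        exact h1.reachable.trans h2.symm.reachable)
    intro g
    change g ∈ H
    rw [this]; trivial
  have key2 : ∀ p, M.graph.Reachable (M.vert true 1) p := by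
    intro p
    obtain ⟨g, hg⟩ := M.vert_surj p
    rw [hg]
    refine (key g).trans ?_
    cases p.1 with
    | true => rfl
    | false => exact SimpleGraph.Adj.reachable ⟨true, g, rfl, rfl⟩
  have : Nonempty M.Vert := ⟨M.vert true 1⟩
  exact ⟨fun p q => (key2 p).symm.trans (key2 q)⟩

def P (i : Bool) (u : G) : Prop := M.E false u ∨ (i = false ∧ u ∈ M.S false)

variable {M}

theorem P.smul {i : Bool} {u a : G} (h : M.P i u) (ha : a ∈ M.S i) : M.P i (a * u) := by
  rcases h with h | ⟨rfl, h⟩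
  · by_cases hn : i = false ∧ u ∈ M.S false
    · obtain ⟨rfl, hn⟩ := hn
      exact Or.inr ⟨rfl, mul_mem ha hn⟩
    · exact Or.inl (h.smul ha hn)
  · exact Or.inr ⟨rfl, mul_mem ha h⟩

variable (M)

def side (g : G) (p : M.Vert) : Prop := ∃ h, p = M.vert p.1 h ∧ M.P p.1 (h⁻¹ * g)

theorem side_vert (g h : G) (i : Bool) : M.side g (M.vert i h) ↔ M.P i (h⁻¹ * g) := by
  constructor
  · rintro ⟨h', e, hp⟩
    have := M.vert_eq.1 e
    have h2 := P.smul hp this.2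
    have e3 : h⁻¹ * h' * (h'⁻¹ * g) = h⁻¹ * g := by group
    rw [e3] at h2
    exact h2
  · intro hp
    exact ⟨h, rfl, hp⟩

theorem isAcyclic : M.graph.IsAcyclic := by
  rw [SimpleGraph.isAcyclic_iff_forall_adj_isBridge]
  rintro p q ⟨i, g, rfl, rfl⟩
  have key : ¬ (M.graph.deleteEdges {s(M.vert true g, M.vert false g)}).Reachable
      (M.vert true g) (M.vert false g) := by
    rintro ⟨w⟩
    have hkeep : ∀ p q, (M.graph.deleteEdges {s(M.vert true g, M.vert false g)}).Adj p q →
        (M.side g p ↔ M.side g q) := by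
      intro p q hpq
      rw [SimpleGraph.deleteEdges_adj] at hpq
      obtain ⟨⟨i, h, rfl, rfl⟩, hne⟩ := hpq
      have hnC : h⁻¹ * g ∉ M.C := by
        intro hc
        apply hne
        have : ∀ j, M.vert j h = M.vert j g := fun j => M.vert_eq.2 ⟨rfl, M.hC j hc⟩
        rw [this, this]
        cases i <;> simp [Sym2.eq_swap]
      have hP : M.P true (h⁻¹ * g) ↔ M.P false (h⁻¹ * g) := by
        constructor
        · rintro (h | h)
          · exact Or.inl h
          · simp at h
        · rintro (h | h)
          · exact Or.inl h
          · exact Or.inl ⟨_, .base _ h.2 hnC⟩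
      rw [side_vert, side_vert]
      cases i
      · exact hP.symm
      · exact hP
    have hw : ∀ p q (w : (M.graph.deleteEdges {s(M.vert true g, M.vert false g)}).Walk p q),
        (M.side g p ↔ M.side g q) := by
      intro p q w
      induction w with
      | nil => rfl
      | cons h _ ih => exact (hkeep _ _ h).trans ih
    have h1 := hw _ _ w
    rw [side_vert, side_vert] at h1
    have h2 : M.P false (g⁻¹ * g) := Or.inr ⟨rfl, by simp⟩
    rcases h1.2 h2 with h | h
    · exact h.not_mem (by simp)
    · simp at h
  rw [SimpleGraph.isBridge_iff]
  cases i with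
  | true => exact key
  | false =>
    intro h
    apply key
    rw [Sym2.eq_swap] at h
    exact h.symm

/-- The action on the Bass-Serre tree. -/
def tree : TreeAction G where
  V := M.Vert
  T := M.graph
  isTree := ⟨M.connected, M.isAcyclic⟩
  act := M.actHom

theorem tree_fix {h : G} {i : Bool} {g : G} :
    M.tree.act h (M.vert i g) = M.vert i g ↔ g⁻¹ * h * g ∈ M.S i := by
  change M.vert i (h * g) = M.vert i g ↔ _
  rw [vert_eq, ← Subgroup.inv_mem_iff]
  simp [mul_assoc]

/-- two vertices of the same type have even distance -/
theorem adj_type {p q : M.Vert} (h : M.graph.Adj p q) : q.1 = !p.1 := by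
  obtain ⟨i, g, rfl, rfl⟩ := h
  rfl

theorem adj_of_dist_one {p q : M.Vert} (h : M.graph.dist p q = 1) : M.graph.Adj p q :=
  SimpleGraph.dist_eq_one_iff_adj.1 h

theorem conj_inter {i : Bool} {w : G} (hw : w ∉ M.S i) :
    ∃ a : G, ∀ s ∈ M.S i, w⁻¹ * s * w ∈ M.S i → ∀ j, a⁻¹ * s * a ∈ M.S j := by
  have hne : M.vert i 1 ≠ M.vert i w := by
    intro h
    have := (M.vert_eq.1 h).2
    simp at this
    exact hw this
  have hpos := M.connected.pos_dist_of_ne hne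
  obtain ⟨u, hu1, hu2⟩ := TreeMetric.exists_pt M.tree.isTree (M.vert i 1) (M.vert i w) 1 hpos
  obtain ⟨i', a, e1, e2⟩ := M.adj_of_dist_one hu1
  have hi : i = i' := congrArg Sigma.fst e1
  subst hi
  refine ⟨a, fun s hs hws => ?_⟩
  have f1 : ∀ h ∈ Subgroup.zpowers s, M.tree.act h (M.vert i 1) = M.vert i 1 := by
    intro h hh
    rw [tree_fix]
    simp only [inv_one, one_mul, mul_one]
    exact (Subgroup.zpowers_le.2 hs) hh
  have f2 : ∀ h ∈ Subgroup.zpowers s, M.tree.act h (M.vert i w) = M.vert i w := by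
    intro h hh
    rw [tree_fix]
    obtain ⟨n, rfl⟩ := Subgroup.mem_zpowers_iff.1 hh
    have : w⁻¹ * s ^ n * w = (w⁻¹ * s * w) ^ n := by
      have := conj_zpow (i := n) (a := w⁻¹) (b := s)
      simp only [inv_inv] at this
      exact this.symm
    rw [this]
    exact zpow_mem hws n
  have hbet : M.tree.T.dist (M.vert i 1) u + M.tree.T.dist u (M.vert i w) =
      M.tree.T.dist (M.vert i 1) (M.vert i w) := by
    change 1 ≤ M.tree.T.dist (M.vert i 1) (M.vert i w) at hpos
    omega
  have f3 := TreeAction.fix_between f1 f2 hbet s (Subgroup.mem_zpowers s)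
  have f4 := f1 s (Subgroup.mem_zpowers s)
  rw [e1, tree_fix] at f4
  rw [e2, tree_fix] at f3
  intro j
  rcases Bool.eq_or_eq_not j i with rfl | rfl
  · exact f4
  · exact f3

/-- A bounded subgroup fixes a vertex. -/
theorem fix_of_bdd {H : Subgroup G} (h : M.tree.Bdd H) :
    ∃ i g, ∀ s ∈ H, g⁻¹ * s * g ∈ M.S i := by
  obtain ⟨z, hz⟩ := h.center
  obtain ⟨g, hg⟩ := M.vert_surj z
  refine ⟨Sigma.fst (show M.Vert from z), g, fun s hs => ?_⟩
  rw [← tree_fix, ← hg]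
  have h1 := hz s hs
  rcases Nat.lt_or_ge (M.tree.T.dist z (M.tree.act s z)) 1 with h2 | h2
  · exact (TreeMetric.dist_zero M.tree.isTree (by omega)).symm
  · have h3 := M.adj_type (M.adj_of_dist_one (le_antisymm h1 h2))
    have h4 : Sigma.fst (show M.Vert from (M.tree.act s z)) = Sigma.fst (show M.Vert from z) := rfl
    rw [h4] at h3
    simp at h3

theorem long_stab {x y : M.Vert} (hd : 3 ≤ M.tree.T.dist x y) (j : Bool) :
    ∃ g w, w ∉ M.S j ∧ ∀ s, M.tree.act s x = x → M.tree.act s y = y →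
      g⁻¹ * s * g ∈ M.S j ∧ w⁻¹ * (g⁻¹ * s * g) * w ∈ M.S j := by
  have hT := M.tree.isTree
  obtain ⟨u1, a1, b1⟩ := TreeMetric.exists_pt hT x y 1 (by omega)
  obtain ⟨u2, a2, b2⟩ := TreeMetric.exists_pt hT u1 y 1 (by omega)
  obtain ⟨u3, a3, b3⟩ := TreeMetric.exists_pt hT u2 y 1 (by omega)
  have c2 := TreeMetric.tri hT x u1 u2
  have c3 := TreeMetric.tri hT x u2 u3
  have c2y := TreeMetric.tri hT x u2 y
  have c3y := TreeMetric.tri hT x u3 y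
  have d2 : M.tree.T.dist x u2 = 2 := by omega
  have d3 : M.tree.T.dist x u3 = 3 := by omega
  have t1 := M.adj_type (M.adj_of_dist_one a1)
  have t2 := M.adj_type (M.adj_of_dist_one a2)
  have t3 := M.adj_type (M.adj_of_dist_one a3)
  have fixed : ∀ u, M.tree.T.dist x u + M.tree.T.dist u y = M.tree.T.dist x y →
      ∀ s, M.tree.act s x = x → M.tree.act s y = y → M.tree.act s u = u := by
    exact fun u hu s hx hy => TreeAction.fix_between_one hx hy hu
  have main : ∀ p q : M.Vert, p.1 = j → q.1 = j → p ≠ q →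
      (∀ s, M.tree.act s x = x → M.tree.act s y = y →
        M.tree.act s p = p ∧ M.tree.act s q = q) →
      ∃ g w, w ∉ M.S j ∧ ∀ s, M.tree.act s x = x → M.tree.act s y = y →
        g⁻¹ * s * g ∈ M.S j ∧ w⁻¹ * (g⁻¹ * s * g) * w ∈ M.S j := by
    intro p q hp hq hne hf
    obtain ⟨g, hg⟩ := M.vert_surj p
    obtain ⟨h, hh⟩ := M.vert_surj q
    rw [hp] at hg
    rw [hq] at hh
    refine ⟨g, g⁻¹ * h, ?_, ?_⟩
    · intro hm
      exact hne (by rw [hg, hh, vert_eq]; exact ⟨rfl, hm⟩)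
    · intro s hx hy
      have := hf s hx hy
      rw [hg, hh, tree_fix, tree_fix] at this
      refine ⟨this.1, ?_⟩
      have e : (g⁻¹ * h)⁻¹ * (g⁻¹ * s * g) * (g⁻¹ * h) = h⁻¹ * s * h := by group
      rw [e]; exact this.2
  by_cases hj : x.1 = j
  · refine main x u2 hj (by rw [t2, t1, hj]; simp) ?_ (fun s hx hy => ⟨hx, fixed u2 (by omega) s hx hy⟩)
    intro h
    rw [← h] at d2
    exact absurd (SimpleGraph.dist_self.symm.trans d2) (by norm_num)
  · have hj1 : Sigma.fst (show M.Vert from u1) = j := by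
      rw [t1]; revert hj; cases x.1 <;> cases j <;> simp
    refine main u1 u3 hj1 (by rw [t3, t2, hj1]; simp) ?_
      (fun s hx hy => ⟨fixed u1 (by omega) s hx hy, fixed u3 (by omega) s hx hy⟩)
    rintro rfl
    omega

end Amalgam

namespace GraphProduct

variable {V : Type} {Γ : SimpleGraph V} {Gv : V → Type} [∀ v, Group (Gv v)]

theorem of_comm {u v : V} (h : Γ.Adj u v) (a : Gv u) (b : Gv v) :
    of Γ Gv u a * of Γ Gv v b = of Γ Gv v b * of Γ Gv u a := by
  have h1 : (QuotientGroup.mk' (Subgroup.normalClosure (graphProductRels Γ Gv)))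
      (Monoid.CoprodI.of a * Monoid.CoprodI.of b *
      (Monoid.CoprodI.of a)⁻¹ * (Monoid.CoprodI.of b)⁻¹) = 1 := by
    rw [← MonoidHom.mem_ker, QuotientGroup.ker_mk']
    exact Subgroup.subset_normalClosure ⟨u, v, h, a, b, rfl⟩
  simp only [map_mul, map_inv] at h1
  rw [mul_inv_eq_one, mul_inv_eq_iff_eq_mul] at h1
  exact h1

def lift {K : Type*} [Group K] (φ : ∀ v, Gv v →* K)
    (h : ∀ u v, Γ.Adj u v → ∀ a b, φ u a * φ v b = φ v b * φ u a) : GraphProduct Γ Gv →* K :=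
  QuotientGroup.lift _ (Monoid.CoprodI.lift φ) (by
    intro x hx
    revert x
    change Subgroup.normalClosure (graphProductRels Γ Gv) ≤ _
    apply Subgroup.normalClosure_le_normal
    rintro _ ⟨u, v, huv, a, b, rfl⟩
    simp [MonoidHom.mem_ker, h u v huv a b])

theorem lift_of {K : Type*} [Group K] (φ : ∀ v, Gv v →* K)
    (h : ∀ u v, Γ.Adj u v → ∀ a b, φ u a * φ v b = φ v b * φ u a) (v : V) (x : Gv v) :
    lift φ h (of Γ Gv v x) = φ v x := by
  change Monoid.CoprodI.lift φ (Monoid.CoprodI.of x) = φ v x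
  simp

theorem full_le {S : Set V} {H : Subgroup (GraphProduct Γ Gv)}
    (h : ∀ v ∈ S, ∀ x, of Γ Gv v x ∈ H) : full Γ Gv S ≤ H := by
  refine iSup₂_le fun v hv => ?_
  rintro _ ⟨x, rfl⟩
  exact h v hv x

theorem of_mem {S : Set V} {v : V} (hv : v ∈ S) (x : Gv v) : of Γ Gv v x ∈ full Γ Gv S :=
  (le_iSup₂ (f := fun v (_ : v ∈ S) => (of Γ Gv v).range) v hv) ⟨x, rfl⟩

theorem full_mono {S S' : Set V} (h : S ⊆ S') : full Γ Gv S ≤ full Γ Gv S' :=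
  full_le fun _ hv x => of_mem (h hv) x

theorem iSup_range : ⨆ v, (of Γ Gv v).range = ⊤ := by
  rw [eq_top_iff]
  intro x _
  obtain ⟨y, rfl⟩ := QuotientGroup.mk'_surjective _ x
  induction y using Monoid.CoprodI.induction_on with
  | one => rw [map_one]; exact one_mem _
  | of v x => exact (le_iSup (fun v => (of Γ Gv v).range) v) ⟨x, rfl⟩
  | mul x y hx hy => rw [map_mul]; exact mul_mem (hx trivial) (hy trivial)

theorem eq_top_of {H : Subgroup (GraphProduct Γ Gv)} (h : ∀ v x, of Γ Gv v x ∈ H) : H = ⊤ := by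
  rw [eq_top_iff, ← iSup_range]
  refine iSup_le fun v => ?_
  rintro _ ⟨x, rfl⟩
  exact h v x

open Classical in
/-- The canonical retraction onto a full subgroup. -/
noncomputable def ret (S : Set V) : GraphProduct Γ Gv →* GraphProduct Γ Gv :=
  lift (fun v => if v ∈ S then of Γ Gv v else 1) (by
    intro u v huv a b
    by_cases hu : u ∈ S <;> by_cases hv : v ∈ S <;> simp [hu, hv, of_comm huv])

theorem ret_of_mem {S : Set V} {v : V} (hv : v ∈ S) (x : Gv v) :
    ret S (of Γ Gv v x) = of Γ Gv v x := by
  rw [ret, lift_of]; simp [hv]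

theorem ret_of_not_mem {S : Set V} {v : V} (hv : v ∉ S) (x : Gv v) :
    ret S (of Γ Gv v x) = 1 := by
  rw [ret, lift_of]; simp [hv]

theorem ret_eq {S : Set V} {x : GraphProduct Γ Gv} (hx : x ∈ full Γ Gv S) : ret S x = x := by
  have : full Γ Gv S ≤ (ret S).eqLocus (MonoidHom.id _) :=
    full_le fun v hv x => ret_of_mem hv x
  exact this hx

theorem ret_mem {S S' : Set V} {x : GraphProduct Γ Gv} (hx : x ∈ full Γ Gv S') :
    ret S x ∈ full Γ Gv (S ∩ S') := by
  have : full Γ Gv S' ≤ (full Γ Gv (S ∩ S')).comap (ret S) := by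
    refine full_le fun v hv x => ?_
    rw [Subgroup.mem_comap]
    by_cases h : v ∈ S
    · rw [ret_of_mem h]; exact of_mem (S := S ∩ S') ⟨h, hv⟩ x
    · rw [ret_of_not_mem h]; exact one_mem _
  exact this hx

theorem mem_inter {S S' : Set V} {x : GraphProduct Γ Gv} (h : x ∈ full Γ Gv S)
    (h' : x ∈ full Γ Gv S') : x ∈ full Γ Gv (S ∩ S') := by
  rw [← ret_eq h]; exact ret_mem h'

theorem full_empty : full Γ Gv ∅ = ⊥ := by
  rw [eq_bot_iff]; exact full_le (by simp)

theorem full_comm {S S' : Set V} (h : ∀ u ∈ S, ∀ v ∈ S', Γ.Adj u v) :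
    ∀ x ∈ full Γ Gv S, ∀ y ∈ full Γ Gv S', x * y = y * x := by
  have h1 : full Γ Gv S ≤ Subgroup.centralizer (full Γ Gv S') := by
    rw [Subgroup.le_centralizer_iff]
    refine full_le fun v hv b => ?_
    have h2 : full Γ Gv S ≤ Subgroup.centralizer (Subgroup.zpowers (of Γ Gv v b)) := by
      refine full_le fun u hu a => ?_
      rw [Subgroup.mem_centralizer_iff]
      intro y hy
      obtain ⟨n, rfl⟩ := Subgroup.mem_zpowers_iff.1 hy
      have : Commute (of Γ Gv v b) (of Γ Gv u a) := (of_comm (h u hu v hv) a b).symm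
      exact this.zpow_left n
    rw [Subgroup.le_centralizer_iff] at h2
    exact h2 (Subgroup.mem_zpowers _)
  intro x hx y hy
  exact (Subgroup.mem_centralizer_iff.1 (h1 hx) y hy).symm

/-- the injectivity of `of` -/
theorem of_injective (v : V) : Function.Injective (of Γ Gv v) := by
  classical
  let f : GraphProduct Γ Gv →* Gv v := lift (fun u => if h : u = v then h ▸ MonoidHom.id _ else 1)
    (by
      intro a b hab x y
      by_cases ha : a = v
      · have hb : b ≠ v := by rintro rfl; exact hab.ne ha
        simp [hb]
      · simp [ha])
  intro x y hxy
  have := congrArg f hxy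
  simpa [f, lift_of] using this

/-- a conjugate of a full subgroup not containing `v` does not contain the vertex group. -/
theorem not_conj (hn : ∀ v, Nontrivial (Gv v)) {v : V} {S : Set V} (hv : v ∉ S)
    {u : GraphProduct Γ Gv} (h : ∀ x, u⁻¹ * of Γ Gv v x * u ∈ full Γ Gv S) : False := by
  obtain ⟨x, hx⟩ := exists_ne (1 : Gv v)
  have h1 := ret_mem (S := {v}) (h x)
  rw [Set.singleton_inter_eq_empty.2 hv, full_empty, Subgroup.mem_bot] at h1
  simp only [map_mul, map_inv] at h1
  rw [ret_of_mem (Set.mem_singleton v)] at h1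
  have h2 : of Γ Gv v x = 1 := by
    rw [mul_assoc, inv_mul_eq_one] at h1
    exact right_eq_mul.1 h1 |> fun h => by simpa using h
  exact hx (of_injective v (by rw [h2, map_one]))

section split

variable (Si : Bool → Set V) (hcov : ∀ v, ∃ i, v ∈ Si i)
  (hadj : ∀ u v, Γ.Adj u v → ∃ i, u ∈ Si i ∧ v ∈ Si i)

theorem inter_sub (i : Bool) : full Γ Gv (Si true ∩ Si false) ≤ full Γ Gv (Si i) := by
  apply full_mono
  cases i
  · exact Set.inter_subset_right
  · exact Set.inter_subset_left

abbrev ofS {S : Set V} {v : V} (hv : v ∈ S) : Gv v →* full Γ Gv S :=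
  (of Γ Gv v).codRestrict (full Γ Gv S) (of_mem hv)

abbrev Push (Γ : SimpleGraph V) (Gv : V → Type) [∀ v, Group (Gv v)] (Si : Bool → Set V) :=
  Monoid.PushoutI (fun i => Subgroup.inclusion (inter_sub (Γ := Γ) (Gv := Gv) Si i))

noncomputable def vhom (v : V) : Gv v →* Push Γ Gv Si :=
  (Monoid.PushoutI.of (φ := fun i => Subgroup.inclusion (inter_sub (Γ := Γ) (Gv := Gv) Si i))
    (hcov v).choose).comp (ofS (hcov v).choose_spec)

theorem vhom_eq (v : V) (x : Gv v) (i : Bool) (hi : v ∈ Si i) :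
    vhom (Γ := Γ) Si hcov v x =
      Monoid.PushoutI.of (φ := fun i => Subgroup.inclusion (inter_sub (Γ := Γ) (Gv := Gv) Si i))
        i ⟨of Γ Gv v x, of_mem hi x⟩ := by
  have gen : ∀ i j (hi : v ∈ Si i) (hj : v ∈ Si j),
      Monoid.PushoutI.of (φ := fun i => Subgroup.inclusion (inter_sub (Γ := Γ) (Gv := Gv) Si i))
        i ⟨of Γ Gv v x, of_mem hi x⟩ =
      Monoid.PushoutI.of (φ := fun i => Subgroup.inclusion (inter_sub (Γ := Γ) (Gv := Gv) Si i))
        j ⟨of Γ Gv v x, of_mem hj x⟩ := by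
    intro i j hi hj
    by_cases hij : i = j
    · subst hij; rfl
    have hm : v ∈ Si true ∩ Si false := by
      cases i <;> cases j <;> simp_all
    have h1 := Monoid.PushoutI.of_apply_eq_base
      (fun i => Subgroup.inclusion (inter_sub (Γ := Γ) (Gv := Gv) Si i)) i ⟨of Γ Gv v x, of_mem hm x⟩
    have h2 := Monoid.PushoutI.of_apply_eq_base
      (fun i => Subgroup.inclusion (inter_sub (Γ := Γ) (Gv := Gv) Si i)) j ⟨of Γ Gv v x, of_mem hm x⟩
    exact h1.trans h2.symm
  exact gen _ _ (hcov v).choose_spec hi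

noncomputable def splitHom : GraphProduct Γ Gv →* Push Γ Gv Si := lift (vhom (Γ := Γ) Si hcov) (by
    intro u v huv a b
    obtain ⟨i, hu, hv⟩ := hadj u v huv
    rw [vhom_eq _ _ u a i hu, vhom_eq _ _ v b i hv, ← map_mul, ← map_mul]
    congr 1
    exact Subtype.ext (of_comm huv a b))

/-- The splitting of a graph product along a separating full subgraph. -/
noncomputable def split : Amalgam (GraphProduct Γ Gv) where
  S i := full Γ Gv (Si i)
  C := full Γ Gv (Si true ∩ Si false)
  hC := inter_sub Si
  gen H hH := eq_top_of (by
    intro v x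
    obtain ⟨i, hi⟩ := hcov v
    exact hH i (of_mem hi x))
  f := splitHom Si hcov hadj
  hf i := by
    rintro ⟨x, hx⟩
    have : full Γ Gv (Si i) ≤ (((splitHom (Gv := Gv) Si hcov hadj).comp (full Γ Gv (Si i)).subtype).eqLocus
        (Monoid.PushoutI.of (φ := fun i => Subgroup.inclusion
          (inter_sub (Γ := Γ) (Gv := Gv) Si i)) i)).map (full Γ Gv (Si i)).subtype := by
      refine full_le fun v hv x => ?_
      refine ⟨⟨of Γ Gv v x, of_mem hv x⟩, ?_, rfl⟩
      change splitHom (Gv := Gv) Si hcov hadj (of Γ Gv v x) = _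
      rw [splitHom, lift_of, vhom_eq _ _ v x i hv]
    obtain ⟨⟨y, hy⟩, h1, h2⟩ := this hx
    change y = x at h2
    subst h2
    exact h1

end split

end GraphProduct

namespace GraphProduct

variable {V : Type} {Γ : SimpleGraph V} {Gv : V → Type} [∀ v, Group (Gv v)]

/-- the splitting over the complement of two non-adjacent vertices -/
noncomputable def splitAB (Gv : V → Type) [∀ v, Group (Gv v)] {a b : V} (hne : a ≠ b)
    (hna : ¬ Γ.Adj a b) : Amalgam (GraphProduct Γ Gv) :=
  split (fun i => cond i {b}ᶜ {a}ᶜ)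
    (by
      intro v
      by_cases h : v = b
      · exact ⟨false, by simp [h, hne.symm]⟩
      · exact ⟨true, by simp [h]⟩)
    (by
      intro u v huv
      by_cases h : u = b ∨ v = b
      · refine ⟨false, ?_⟩
        rcases h with rfl | rfl
        · exact ⟨by simpa using hne.symm, by rintro rfl; exact hna huv.symm⟩
        · exact ⟨by rintro rfl; exact hna huv, by simpa using hne.symm⟩
      · push Not at h
        exact ⟨true, by simpa using h.1, by simpa using h.2⟩)

noncomputable def splitA (Γ : SimpleGraph V) (Gv : V → Type) [∀ v, Group (Gv v)] (a : V) :
    Amalgam (GraphProduct Γ Gv) :=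
  split (fun i => cond i {a}ᶜ (insert a (Γ.neighborSet a)))
    (by
      intro v
      by_cases h : v = a
      · exact ⟨false, by simp [h]⟩
      · exact ⟨true, by simp [h]⟩)
    (by
      intro u v huv
      by_cases h : u = a ∨ v = a
      · refine ⟨false, ?_⟩
        rcases h with rfl | rfl
        · exact ⟨by simp, by simp [huv]⟩
        · exact ⟨by simp [huv.symm], by simp⟩
      · push Not at h
        exact ⟨true, by simpa using h.1, by simpa using h.2⟩)

theorem conj_link (a : V) {w : GraphProduct Γ Gv} (hw : w ∉ full Γ Gv {a}ᶜ) :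
    ∃ c : GraphProduct Γ Gv, ∀ s ∈ full Γ Gv {a}ᶜ, w⁻¹ * s * w ∈ full Γ Gv {a}ᶜ →
      c⁻¹ * s * c ∈ full Γ Gv (Γ.neighborSet a) := by
  obtain ⟨c, hc⟩ := (splitA Γ Gv a).conj_inter (i := true) hw
  refine ⟨c, fun s hs hs' => ?_⟩
  have h1 := hc s hs hs' true
  have h2 := hc s hs hs' false
  refine full_mono ?_ (mem_inter (S := {a}ᶜ) (S' := insert a (Γ.neighborSet a)) h1 h2)
  rintro v ⟨hv, rfl | hv'⟩
  · exact absurd rfl hv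
  · exact hv'

theorem acyl {a b : V} (hne : a ≠ b) (hna : ¬ Γ.Adj a b)
    (hfin : Finite (full Γ Gv (Γ.neighborSet a ∩ Γ.neighborSet b))) :
    (splitAB Gv hne hna).tree.Acylindrical := by
  refine ⟨3, Nat.card (full Γ Gv (Γ.neighborSet a ∩ Γ.neighborSet b)), Nat.card_pos, ?_⟩
  intro x y hxy
  have key : ∃ d : GraphProduct Γ Gv, ∀ s, (splitAB Gv hne hna).tree.act s x = x →
      (splitAB Gv hne hna).tree.act s y = y →
      d⁻¹ * s * d ∈ full Γ Gv (Γ.neighborSet a ∩ Γ.neighborSet b) := by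
    obtain ⟨g1, w1, hw1, h1⟩ := (splitAB Gv hne hna).long_stab hxy true
    obtain ⟨g2, w2, hw2, h2⟩ := (splitAB Gv hne hna).long_stab hxy false
    obtain ⟨c1, hc1⟩ := conj_link b hw1
    obtain ⟨c2, hc2⟩ := conj_link a hw2
    refine ⟨g1 * c1 * ret (Γ.neighborSet b) ((g1 * c1)⁻¹ * (g2 * c2)), fun s hx hy => ?_⟩
    have k1 := hc1 _ (h1 s hx hy).1 (h1 s hx hy).2
    have k2 := hc2 _ (h2 s hx hy).1 (h2 s hx hy).2
    have k3 := ret_mem (S := Γ.neighborSet b) k2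
    have e : c2⁻¹ * (g2⁻¹ * s * g2) * c2 = ((g1 * c1)⁻¹ * (g2 * c2))⁻¹ *
        (c1⁻¹ * (g1⁻¹ * s * g1) * c1) * ((g1 * c1)⁻¹ * (g2 * c2)) := by group
    rw [e, map_mul, map_mul, map_inv, ret_eq k1] at k3
    rw [Set.inter_comm]
    convert k3 using 1
    group
  obtain ⟨d, hd⟩ := key
  have hinj : Function.Injective (fun s : GraphProduct Γ Gv => d⁻¹ * s * d) := by
    intro s t h
    simpa using h
  have hT : (full Γ Gv (Γ.neighborSet a ∩ Γ.neighborSet b) : Set (GraphProduct Γ Gv)).Finite :=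
    Set.toFinite _
  have hmaps : Set.MapsTo (fun s : GraphProduct Γ Gv => d⁻¹ * s * d)
      {g | (splitAB Gv hne hna).tree.act g x = x ∧ (splitAB Gv hne hna).tree.act g y = y}
      (full Γ Gv (Γ.neighborSet a ∩ Γ.neighborSet b)) := fun s hs => hd s hs.1 hs.2
  exact ⟨Set.Finite.of_injOn hmaps hinj.injOn hT,
    Set.ncard_le_ncard_of_injOn _ hmaps hinj.injOn hT⟩

theorem not_bdd (hn : ∀ v, Nontrivial (Gv v)) {a b : V} (hne : a ≠ b) (hna : ¬ Γ.Adj a b) :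
    ¬ (splitAB Gv hne hna).tree.Bdd (full Γ Gv {a, b}) := by
  intro h
  obtain ⟨i, g, hg⟩ := (splitAB Gv hne hna).fix_of_bdd h
  cases i with
  | true => exact not_conj hn (v := b) (S := {b}ᶜ) (by simp) (fun x => hg _ (of_mem (by simp) x))
  | false => exact not_conj hn (v := a) (S := {a}ᶜ) (by simp) (fun x => hg _ (of_mem (by simp) x))

theorem infinite_pair (hn : ∀ v, Nontrivial (Gv v)) {a b : V} (hne : a ≠ b)
    (hna : ¬ Γ.Adj a b) : Infinite (full Γ Gv {a, b}) := by
  rw [← not_finite_iff_infinite]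
  exact fun h => not_bdd hn hne hna (TreeAction.Bdd.of_finite _ h)

theorem inf_eq_bot {S S' : Set V} (h : ∀ v ∈ S, v ∉ S') : full Γ Gv S ⊓ full Γ Gv S' = ⊥ := by
  rw [eq_bot_iff, ← full_empty]
  intro x hx
  have := mem_inter (Subgroup.mem_inf.1 hx).1 (Subgroup.mem_inf.1 hx).2
  refine full_mono ?_ this
  rintro v ⟨h1, h2⟩
  exact h v h1 h2

theorem range_eq (v : V) : (of Γ Gv v).range = full Γ Gv {v} := by
  simp [full]

theorem all_bdd [Fintype V] (hn : ∀ v, Nontrivial (Gv v)) {a b : V} (hne : a ≠ b)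
    (hna : ¬ Γ.Adj a b) (hsep : ¬ ∃ a b : V, SeparatedPair Γ Gv a b)
    (A : TreeAction (GraphProduct Γ Gv)) (hA : A.Acylindrical) : A.Bdd ⊤ := by
  have hpair : ∀ v w, v ≠ w → ¬ Γ.Adj v w → A.Bdd (full Γ Gv {v, w}) := by
    intro v w hvw hnad
    have hK : Infinite (full Γ Gv (Γ.neighborSet v ∩ Γ.neighborSet w)) := by
      rw [← not_finite_iff_infinite]
      exact fun h => hsep ⟨v, w, hvw, hnad, h⟩
    refine TreeAction.bdd_of_commuting hA (full_comm ?_) (inf_eq_bot ?_)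
      (infinite_pair hn hvw hnad) hK
    · rintro u (rfl | rfl) x hx
      · exact hx.1
      · exact hx.2
    · rintro u (rfl | rfl) hx
      · exact Γ.loopless.irrefl _ hx.1
      · exact Γ.loopless.irrefl _ hx.2
  have hsing : ∀ v, A.Bdd (full Γ Gv {v}) := by
    intro v
    by_cases h : ∃ w, v ≠ w ∧ ¬ Γ.Adj v w
    · obtain ⟨w, h1, h2⟩ := h
      exact (hpair v w h1 h2).mono (full_mono (by simp))
    · push Not at h
      by_cases hf : Finite (full Γ Gv {v})
      · exact TreeAction.Bdd.of_finite _ hf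
      · have hav : v ≠ a := by rintro rfl; exact hna (h b hne)
        have hbv : v ≠ b := by rintro rfl; exact hna (h a hne.symm).symm
        refine TreeAction.bdd_of_commuting hA (K := full Γ Gv {a, b}) (full_comm ?_) (inf_eq_bot ?_)
          (not_finite_iff_infinite.1 hf) (infinite_pair hn hne hna)
        · rintro u rfl x (rfl | rfl)
          · exact h _ hav
          · exact h _ hbv
        · rintro u rfl
          simp [hav, hbv]
  rw [← iSup_range]
  refine TreeAction.bdd_of_pairs _ fun v w => ?_
  rw [range_eq, range_eq]
  by_cases hvw : v = w
  · subst hvw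
    rw [sup_idem]; exact hsing v
  by_cases hadj : Γ.Adj v w
  · refine TreeAction.Bdd.sup_of_comm (hsing v) (hsing w) (full_comm ?_)
    rintro _ rfl _ rfl
    exact hadj
  · exact (hpair v w hvw hadj).mono (sup_le (full_mono (by simp)) (full_mono (by simp)))

end GraphProduct

theorem TreeAction.bdd_top {G : Type*} [Group G] {A : TreeAction G} :
    A.Bdd ⊤ ↔ A.BoundedOrbits := by
  simp [TreeAction.Bdd, TreeAction.BoundedOrbits]

/-- **Main theorem for graph products.** A non-degenerate graph product `G` over a
finite simple graph `Γ` with `diam(Γ) ≥ 2` is acylindrically arboreal (admits a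
non-elementary acylindrical action on a simplicial tree) if and only if `G` is not
virtually cyclic and `Γ` contains a pair of separated vertices. -/
theorem graphProduct_acylindricallyArboreal_iff {V : Type} [Fintype V]
    (Γ : SimpleGraph V) (Gv : V → Type) [∀ v, Group (Gv v)]
    (hnd : GraphProduct.NonDegenerate Gv) (hdiam : Γ.diamAtLeast 2) :
    AcylindricallyArboreal (GraphProduct Γ Gv) ↔
      (¬ IsVirtuallyCyclic (GraphProduct Γ Gv) ∧
        ∃ a b : V, GraphProduct.SeparatedPair Γ Gv a b) := by
  constructor
  · rintro ⟨A, hA, hub, hvc⟩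
    refine ⟨hvc, ?_⟩
    by_contra hsep
    obtain ⟨a, b, hne, hd⟩ := hdiam
    have hna : ¬ Γ.Adj a b := by
      intro h
      rcases hd with hd | hd
      · exact hd h.reachable
      · rw [SimpleGraph.dist_eq_one_iff_adj.2 h] at hd
        omega
    exact hub (TreeAction.bdd_top.1 (GraphProduct.all_bdd hnd.1 hne hna hsep A hA))
  · rintro ⟨hvc, a, b, hne, hna, hfin⟩
    refine ⟨(GraphProduct.splitAB Gv hne hna).tree, GraphProduct.acyl hne hna hfin, ?_, hvc⟩
    intro h
    exact GraphProduct.not_bdd hnd.1 hne hna ((TreeAction.bdd_top.2 h).mono le_top)
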